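/- Existence holds for the labeled nonlinear system: for every jointly measurable initial datum θ₀ : I × Ω → 𝕋 and every jointly measurable family B : I × Ω → C([0,T],ℝ) of continuous processes with B^x_0 = 0, there exists a solution θ of the nonlinear system for the labeled graphon W with initial datum θ₀ and driving processes B. -/

import Mathlib

open MeasureTheory ProbabilityTheory Real Set Filter Topology

noncomputable section

/-- The one-dimensional torus `𝕋 = ℝ/(2πℤ)`. -/
abbrev Torus : Type := AddCircle (2 * Real.pi)

instance : Fact (0 < 2 * Real.pi) := ⟨by positivity⟩

/-- The label space `I = [0,1]`. -/
abbrev I01 : Set ℝ := Set.Icc (0:ℝ) 1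

/-- The law at time `s` of the process `θ` under `P`. -/
def pathLaw {Ω : Type*} [MeasurableSpace Ω] (P : Measure Ω) (θ : Ω → ℝ → Torus) (s : ℝ) :
    Measure Torus := P.map (fun ω => θ ω s)

/-- The integrated drift
`∫₀ᵗ F(p_s) ds + ∫₀ᵗ ∫_I W(x,y) ( ∫_𝕋 Γ(p_s, u) μ^y_s(du) ) dy ds`. -/
def drift (F : Torus → ℝ) (Γ : Torus → Torus → ℝ) (W : ℝ → ℝ → ℝ)
    (μ : ℝ → ℝ → Measure Torus) (x : ℝ) (p : ℝ → Torus) (t : ℝ) : ℝ :=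
  (∫ s in Set.Icc 0 t, F (p s)) +
  ∫ s in Set.Icc 0 t, ∫ y in I01, W x y * ∫ u, Γ (p s) u ∂(μ y s)

/-- `θ : I × Ω → C([0,T],𝕋)` (jointly measurable, continuous in time) is a solution of the
labeled nonlinear system for the labeled graphon `W` with initial datum `θ0` and driving
processes `B`: writing `μ^y_s` for the law of `θ^y_s`, for a.e. `x ∈ I`, `P`-a.s., for all
`t ∈ [0,T]`,
`θ^x_t = θ^x_0 + π( ∫₀ᵗ F(θ^x_s) ds + ∫₀ᵗ ∫_I W(x,y) (∫_𝕋 Γ(θ^x_s,u) μ^y_s(du)) dy ds + B^x_t )`. -/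
structure IsLabeledSolution {Ω : Type*} [MeasurableSpace Ω] (T : ℝ) (P : Measure Ω)
    (F : Torus → ℝ) (Γ : Torus → Torus → ℝ) (W : ℝ → ℝ → ℝ)
    (θ0 : ℝ → Ω → Torus) (B : ℝ → Ω → ℝ → ℝ) (θ : ℝ → Ω → ℝ → Torus) : Prop where
  jointMeas : Measurable (fun p : ℝ × Ω => θ p.1 p.2)
  cont : ∀ x ω, ContinuousOn (θ x ω) (Set.Icc 0 T)
  sde : ∀ᵐ x ∂(volume.restrict I01), ∀ᵐ ω ∂P, ∀ t ∈ Set.Icc (0:ℝ) T,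
    θ x ω t = θ0 x ω +
      ((drift F Γ W (fun y s => pathLaw P (θ y) s) x (θ x ω) t + B x ω t : ℝ) : Torus)

/-- `F` is bounded and Lipschitz. -/
def BddLip (F : Torus → ℝ) : Prop :=
  (∃ K : NNReal, LipschitzWith K F) ∧ ∃ M : ℝ, ∀ a, |F a| ≤ M

/-- `Γ` is bounded and Lipschitz (jointly on `𝕋 × 𝕋`). -/
def BddLip2 (Γ : Torus → Torus → ℝ) : Prop :=
  (∃ K : NNReal, LipschitzWith K (fun p : Torus × Torus => Γ p.1 p.2)) ∧
    ∃ M : ℝ, ∀ a b, |Γ a b| ≤ M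

/-- A labeled graphon: a symmetric measurable function `I² → [0,1]`. -/
def IsGraphon (W : ℝ → ℝ → ℝ) : Prop :=
  Measurable (fun p : ℝ × ℝ => W p.1 p.2) ∧ (∀ x y, W x y ∈ Set.Icc (0:ℝ) 1) ∧
    ∀ x y, W x y = W y x

/-!
Viewing a field of trajectories `Θ : ℝ → I × Ω → 𝕋` as one object, the double integral over labels
and laws becomes a single integral over `I × Ω` against `volume ⊗ P`, so the drift is a functional
of the time slice `Θ s : I × Ω → 𝕋` which is Lipschitz for the supremum distance. The associated
Picard map is then a contraction for the supremum distance weighted by `exp (-r |t|)`, with `r`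
larger than the Lipschitz constant. Working with all jointly measurable fields, rather than with
equivalence classes, keeps the equation valid for every label, every sample and every time.
-/

section WeightedContraction

variable {X E : Type*} [MeasurableSpace X] [MetricSpace E] [CompleteSpace E] [MeasurableSpace E]
  [BorelSpace E]

theorem exists_measurable_fixedPoint_of_weighted_contraction {Φ : (X → E) → X → E} {w : X → ℝ}
    {c : ℝ} (hc₀ : 0 ≤ c) (hc₁ : c < 1)
    (hΦ_meas : ∀ f, Measurable f → Measurable (Φ f))
    (hΦ_contr : ∀ f g, Measurable f → Measurable g → ∀ D : ℝ,
      (∀ x, dist (f x) (g x) ≤ D * w x) → ∀ x, dist (Φ f x) (Φ g x) ≤ c * (D * w x))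
    {f₀ : X → E} (hf₀ : Measurable f₀) {D₀ : ℝ} (h₀ : ∀ x, dist (f₀ x) (Φ f₀ x) ≤ D₀ * w x) :
    ∃ f, Measurable f ∧ Φ f = f := by
  let u : ℕ → X → E := fun n => Φ^[n] f₀
  have hu_succ (n : ℕ) : u (n + 1) = Φ (u n) := Function.iterate_succ_apply' Φ n f₀
  have hu_meas (n : ℕ) : Measurable (u n) := by
    induction n with
    | zero => exact hf₀
    | succ n ih => exact hu_succ n ▸ hΦ_meas _ ih
  have hu_step (n : ℕ) (x : X) : dist (u n x) (u (n + 1) x) ≤ D₀ * w x * c ^ n := by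
    induction n generalizing x with
    | zero => simpa [u] using h₀ x
    | succ n ih =>
      rw [hu_succ n, hu_succ (n + 1)]
      calc dist (Φ (u n) x) (Φ (u (n + 1)) x)
          ≤ c * (D₀ * c ^ n * w x) :=
            hΦ_contr _ _ (hu_meas n) (hu_meas (n + 1)) _
              (fun y => (ih y).trans_eq (mul_right_comm _ _ _)) x
        _ = D₀ * w x * c ^ (n + 1) := by ring
  choose f hf using fun x =>
    cauchySeq_tendsto_of_complete (cauchySeq_of_le_geometric c _ hc₁ (hu_step · x))
  have hf_meas : Measurable f := measurable_of_tendsto_metrizable hu_meas (tendsto_pi_nhds.2 hf)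
  have hu_near (n : ℕ) (x : X) : dist (u n x) (f x) ≤ D₀ * c ^ n / (1 - c) * w x :=
    (dist_le_of_le_geometric_of_tendsto c _ hc₁ (hu_step · x) (hf x) n).trans_eq (by ring)
  have hu_image (n : ℕ) (x : X) :
      dist (u (n + 1) x) (Φ f x) ≤ c * (D₀ / (1 - c) * w x) * c ^ n := by
    rw [hu_succ]
    exact (hΦ_contr _ _ (hu_meas n) hf_meas _ (hu_near n) x).trans_eq (by ring)
  refine ⟨f, hf_meas, funext fun x => ?_⟩
  have hu_tendsto : Tendsto (fun n => u (n + 1) x) atTop (𝓝 (Φ f x)) :=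
    tendsto_iff_dist_tendsto_zero.2 <| squeeze_zero (fun _ => dist_nonneg) (hu_image · x) <| by
      simpa only [mul_zero] using (tendsto_pow_atTop_nhds_zero_of_lt_one hc₀ hc₁).const_mul _
  exact tendsto_nhds_unique hu_tendsto ((tendsto_add_atTop_iff_nat 1).2 (hf x))

end WeightedContraction

lemma stronglyMeasurable_setIntegral_Icc {α G : Type*} [MeasurableSpace α] [NormedAddCommGroup G]
    [NormedSpace ℝ G] {f : ℝ → α → G} (hf : StronglyMeasurable (Function.uncurry f)) (c : ℝ) :
    StronglyMeasurable fun q : ℝ × α => ∫ s in Icc c q.1, f s q.2 := by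
  have hset : MeasurableSet {r : (ℝ × α) × ℝ | c ≤ r.2 ∧ r.2 ≤ r.1.1} := by measurability
  have hf' : StronglyMeasurable fun r : (ℝ × α) × ℝ => f r.2 r.1.2 :=
    hf.comp_measurable (measurable_snd.prodMk (measurable_snd.comp measurable_fst))
  convert (hf'.indicator hset).integral_prod_right' (ν := volume) using 2 with q
  rw [← integral_indicator measurableSet_Icc]
  rfl

lemma setIntegral_Icc_exp_mul_abs_le {r : ℝ} (hr : 0 < r) (t : ℝ) :
    ∫ s in Icc 0 t, exp (r * |s|) ≤ exp (r * |t|) / r := by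
  rcases lt_or_ge t 0 with ht | ht
  · rw [Icc_eq_empty (not_le.2 ht), setIntegral_empty]
    positivity
  · calc ∫ s in Icc 0 t, exp (r * |s|)
        = ∫ s in Icc 0 t, exp (r * s) :=
          setIntegral_congr_fun measurableSet_Icc fun s hs => by simp only [abs_of_nonneg hs.1]
      _ = ∫ s in (0)..t, exp (r * s) := by
          rw [integral_Icc_eq_integral_Ioc, intervalIntegral.integral_of_le ht]
      _ = (exp (r * t) - 1) / r := by
          rw [intervalIntegral.integral_comp_mul_left exp hr.ne', integral_exp, mul_zero, exp_zero,
            smul_eq_mul, inv_mul_eq_div]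
      _ ≤ exp (r * |t|) / r := by
          rw [abs_of_nonneg ht]
          gcongr
          exact sub_le_self _ zero_le_one

section LipschitzVelocity

variable {α E : Type*} [MeasurableSpace α] [MetricSpace E] [MeasurableSpace E]

/-- A velocity for particles in `E` indexed by `α`: `b θ a` is the speed of the particle `a` when
the whole configuration is `θ`. It is Lipschitz with constant `L` for the supremum distance between
measurable configurations, and jointly measurable along measurable trajectories. -/
structure IsLipschitzVelocity (L : ℝ) (b : (α → E) → α → ℝ) : Prop where
  measurable : ∀ Θ : ℝ → α → E, Measurable (Function.uncurry Θ) →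
    Measurable (Function.uncurry fun s => b (Θ s))
  lipschitz : ∀ θ θ' : α → E, Measurable θ → Measurable θ' → ∀ δ : ℝ,
    (∀ a, dist (θ a) (θ' a) ≤ δ) → ∀ a, |b θ a - b θ' a| ≤ L * δ

namespace IsLipschitzVelocity

variable {L L' : ℝ} {b b' : (α → E) → α → ℝ}

lemma add (hb : IsLipschitzVelocity L b) (hb' : IsLipschitzVelocity L' b') :
    IsLipschitzVelocity (L + L') (b + b') where
  measurable Θ hΘ := (hb.measurable Θ hΘ).add (hb'.measurable Θ hΘ)
  lipschitz θ θ' hθ hθ' δ hδ a :=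
    calc |b θ a + b' θ a - (b θ' a + b' θ' a)|
        = |(b θ a - b θ' a) + (b' θ a - b' θ' a)| := by rw [add_sub_add_comm]
      _ ≤ |b θ a - b θ' a| + |b' θ a - b' θ' a| := abs_add_le _ _
      _ ≤ L * δ + L' * δ :=
          add_le_add (hb.lipschitz θ θ' hθ hθ' δ hδ a) (hb'.lipschitz θ θ' hθ hθ' δ hδ a)
      _ = (L + L') * δ := (add_mul L L' δ).symm

-- `E` is bounded, so the Lipschitz estimate bounds `b (Θ s) a` in terms of `b (Θ 0) a`.
lemma integrableOn [BoundedSpace E] (hb : IsLipschitzVelocity L b) {Θ : ℝ → α → E}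
    (hΘ : Measurable (Function.uncurry Θ)) (a : α) {S : Set ℝ} (hS : volume S ≠ ⊤) :
    IntegrableOn (fun s => b (Θ s) a) S := by
  obtain ⟨δ, hδ⟩ := Metric.boundedSpace_iff.1 ‹BoundedSpace E›
  have hmeas : Measurable fun s => b (Θ s) a :=
    (hb.measurable Θ hΘ).comp measurable_prodMk_right
  refine IntegrableOn.of_bound hS.lt_top hmeas.aestronglyMeasurable (|b (Θ 0) a| + L * δ)
    (Eventually.of_forall fun s => ?_)
  have hdiff := hb.lipschitz (Θ s) (Θ 0) hΘ.of_uncurry_left hΘ.of_uncurry_left δ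
    (fun _ => hδ _ _) a
  calc ‖b (Θ s) a‖ = |b (Θ 0) a + (b (Θ s) a - b (Θ 0) a)| := by
        rw [add_sub_cancel, Real.norm_eq_abs]
    _ ≤ |b (Θ 0) a| + L * δ := (abs_add_le _ _).trans (by gcongr)

end IsLipschitzVelocity

lemma isLipschitzVelocity_comp [OpensMeasurableSpace E] {F : E → ℝ} {K : NNReal}
    (hF : LipschitzWith K F) :
    IsLipschitzVelocity K fun (θ : α → E) a => F (θ a) where
  measurable _ hΘ := hF.continuous.measurable.comp hΘ
  lipschitz θ θ' _ _ _ hδ a := (hF.dist_le_mul (θ a) (θ' a)).trans (by gcongr; exact hδ a)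

end LipschitzVelocity

section Picard

variable {α : Type*} {p : ℝ}

lemma addCircle_dist_add_coe_le (c : AddCircle p) (x y : ℝ) :
    dist (c + (x : AddCircle p)) (c + (y : AddCircle p)) ≤ |x - y| := by
  rw [dist_add_left, dist_eq_norm, ← AddCircle.coe_sub]
  exact QuotientAddGroup.norm_mk_le_norm

/-- The Picard map of the system `dΘ(t, a) = b (Θ t) a dt + dβ(t, a)` on the circle with initial
configuration `θ₀`; its fixed points are the solutions. For `t < 0` the integral is over the empty
set. -/
def picardMap (b : (α → AddCircle p) → α → ℝ) (θ₀ : α → AddCircle p) (β : ℝ → α → ℝ)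
    (Θ : ℝ → α → AddCircle p) (t : ℝ) (a : α) : AddCircle p :=
  θ₀ a + (((∫ s in Icc 0 t, b (Θ s) a) + β t a : ℝ) : AddCircle p)

variable [MeasurableSpace α] {L : ℝ} {b : (α → AddCircle p) → α → ℝ}
  {θ₀ : α → AddCircle p} {β : ℝ → α → ℝ} {Θ Θ' : ℝ → α → AddCircle p}

namespace IsLipschitzVelocity

lemma measurable_picardMap (hb : IsLipschitzVelocity L b) (hθ₀ : Measurable θ₀)
    (hβ : Measurable (Function.uncurry β)) (hΘ : Measurable (Function.uncurry Θ)) :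
    Measurable (Function.uncurry (picardMap b θ₀ β Θ)) := by
  have hint : Measurable fun q : ℝ × α => ∫ s in Icc 0 q.1, b (Θ s) q.2 :=
    (stronglyMeasurable_setIntegral_Icc (hb.measurable Θ hΘ).stronglyMeasurable 0).measurable
  exact (hθ₀.comp measurable_snd).add
    ((AddCircle.continuous_mk' p).measurable.comp (hint.add hβ))

variable [Fact (0 < p)]

lemma continuousOn_picardMap (hb : IsLipschitzVelocity L b) (hΘ : Measurable (Function.uncurry Θ))
    {a : α} {T : ℝ} (hβ : ContinuousOn (β · a) (Icc 0 T)) :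
    ContinuousOn (picardMap b θ₀ β Θ · a) (Icc 0 T) :=
  continuousOn_const.add <| (AddCircle.continuous_mk' p).comp_continuousOn <|
    (intervalIntegral.continuousOn_primitive_Icc
      (hb.integrableOn hΘ a measure_Icc_lt_top.ne)).add hβ

lemma dist_picardMap_le (hb : IsLipschitzVelocity L b) (hL : 0 ≤ L)
    (hΘ : Measurable (Function.uncurry Θ)) (hΘ' : Measurable (Function.uncurry Θ'))
    {r D : ℝ} (hr : 0 < r) (hD : ∀ s a, dist (Θ s a) (Θ' s a) ≤ D * exp (r * |s|))
    (t : ℝ) (a : α) :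
    dist (picardMap b θ₀ β Θ t a) (picardMap b θ₀ β Θ' t a) ≤ L / r * (D * exp (r * |t|)) := by
  have hD₀ : 0 ≤ D := nonneg_of_mul_nonneg_left (dist_nonneg.trans (hD 0 a)) (exp_pos _)
  have hexp : IntegrableOn (fun s => L * D * exp (r * |s|)) (Icc 0 t) :=
    Continuous.integrableOn_Icc (by fun_prop)
  calc dist (picardMap b θ₀ β Θ t a) (picardMap b θ₀ β Θ' t a)
      ≤ |((∫ s in Icc 0 t, b (Θ s) a) + β t a) - ((∫ s in Icc 0 t, b (Θ' s) a) + β t a)| :=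
        addCircle_dist_add_coe_le _ _ _
    _ = ‖∫ s in Icc 0 t, (b (Θ s) a - b (Θ' s) a)‖ := by
        rw [Real.norm_eq_abs, add_sub_add_right_eq_sub,
          integral_sub (hb.integrableOn hΘ a measure_Icc_lt_top.ne)
            (hb.integrableOn hΘ' a measure_Icc_lt_top.ne)]
    _ ≤ ∫ s in Icc 0 t, L * D * exp (r * |s|) :=
        norm_integral_le_of_norm_le hexp <| Eventually.of_forall fun s =>
          (hb.lipschitz _ _ hΘ.of_uncurry_left hΘ'.of_uncurry_left _ (hD s) a).trans_eq
            (mul_assoc _ _ _).symm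
    _ = L * D * ∫ s in Icc 0 t, exp (r * |s|) := integral_const_mul _ _
    _ ≤ L * D * (exp (r * |t|) / r) := by
        gcongr
        exact setIntegral_Icc_exp_mul_abs_le hr t
    _ = L / r * (D * exp (r * |t|)) := by ring

theorem exists_measurable_picardMap_eq (hb : IsLipschitzVelocity L b) (hL : 0 ≤ L)
    (hθ₀ : Measurable θ₀) (hβ : Measurable (Function.uncurry β)) :
    ∃ Θ, Measurable (Function.uncurry Θ) ∧ picardMap b θ₀ β Θ = Θ := by
  obtain ⟨D₀, hD₀⟩ := Metric.boundedSpace_iff.1 (inferInstance : BoundedSpace (AddCircle p))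
  have hD₀_nonneg : 0 ≤ D₀ := dist_nonneg.trans (hD₀ 0 0)
  have hL₁ : 0 < L + 1 := by positivity
  obtain ⟨f, hf, hfix⟩ := exists_measurable_fixedPoint_of_weighted_contraction
    (Φ := fun f => Function.uncurry (picardMap b θ₀ β (Function.curry f)))
    (w := fun q : ℝ × α => exp ((L + 1) * |q.1|)) (c := L / (L + 1)) (by positivity)
    ((div_lt_one hL₁).2 (lt_add_one L))
    (fun f hf => hb.measurable_picardMap hθ₀ hβ hf)
    (fun f g hf hg D hD q => hb.dist_picardMap_le (Θ := Function.curry f) (Θ' := Function.curry g)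
      hL hf hg hL₁ (fun s a => hD (s, a)) q.1 q.2)
    (f₀ := fun _ => 0) measurable_const
    (fun q => (hD₀ _ _).trans (le_mul_of_one_le_right hD₀_nonneg (one_le_exp (by positivity))))
  exact ⟨Function.curry f, hf, congrArg Function.curry hfix⟩

end IsLipschitzVelocity

end Picard

section Interaction

variable {α E : Type*} [MeasurableSpace α] [MetricSpace E]

/-- The mean-field velocity `∫ K(a, a') Γ(θ a, θ a') m(da')` felt by the particle `a` in the
configuration `θ`. -/
def interaction (m : Measure α) (K : α → α → ℝ) (Γ : E → E → ℝ) (θ : α → E) (a : α) : ℝ :=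
  ∫ a', K a a' * Γ (θ a) (θ a') ∂m

variable [CompactSpace E] [MeasurableSpace E] [BorelSpace E] {m : Measure α}

lemma integrable_mul_comp_of_continuous {k : α → ℝ} (hk : Integrable k m) {g : E → ℝ}
    (hg : Continuous g) {θ : α → E} (hθ : Measurable θ) :
    Integrable (fun a => k a * g (θ a)) m := by
  obtain ⟨M, hM⟩ := isCompact_univ.exists_bound_of_continuousOn hg.continuousOn
  exact hk.mul_bdd (hg.measurable.comp hθ).aestronglyMeasurable
    (Eventually.of_forall fun a => hM (θ a) (mem_univ _))

lemma isLipschitzVelocity_interaction [SFinite m] {K : α → α → ℝ}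
    (hK : Measurable (Function.uncurry K)) {C : NNReal} (hKC : ∀ a, ∫⁻ a', ‖K a a'‖ₑ ∂m ≤ C)
    {Γ : E → E → ℝ} {KΓ : NNReal} (hΓ : LipschitzWith KΓ (Function.uncurry Γ)) :
    IsLipschitzVelocity (C * KΓ) (interaction m K Γ) where
  measurable Θ hΘ := by
    have hker : Measurable fun r : (ℝ × α) × α => K r.1.2 r.2 :=
      hK.comp ((measurable_snd.comp measurable_fst).prodMk measurable_snd)
    have hΘ' : Measurable fun r : (ℝ × α) × α => Θ r.1.1 r.2 :=
      hΘ.comp ((measurable_fst.comp measurable_fst).prodMk measurable_snd)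
    have hpair : Measurable fun r : (ℝ × α) × α => Γ (Θ r.1.1 r.1.2) (Θ r.1.1 r.2) :=
      hΓ.continuous.measurable.comp ((hΘ.comp measurable_fst).prodMk hΘ')
    exact (hker.mul hpair).stronglyMeasurable.integral_prod_right'.measurable
  lipschitz θ θ' hθ hθ' δ hδ a := by
    have hδ₀ : 0 ≤ δ := dist_nonneg.trans (hδ a)
    have hKa : Integrable (K a) m :=
      ⟨hK.of_uncurry_left.aestronglyMeasurable, (hKC a).trans_lt ENNReal.coe_lt_top⟩
    have hΓc (e : E) : Continuous (Γ e) := hΓ.continuous.uncurry_left e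
    have hΓ_le (a' : α) : |Γ (θ a) (θ a') - Γ (θ' a) (θ' a')| ≤ KΓ * δ :=
      (hΓ.dist_le_mul (θ a, θ a') (θ' a, θ' a')).trans <| by
        gcongr
        exact max_le (hδ a) (hδ a')
    calc |interaction m K Γ θ a - interaction m K Γ θ' a|
        = ‖∫ a', K a a' * (Γ (θ a) (θ a') - Γ (θ' a) (θ' a')) ∂m‖ := by
          simp only [interaction, mul_sub, Real.norm_eq_abs]
          rw [integral_sub (integrable_mul_comp_of_continuous hKa (hΓc _) hθ)
            (integrable_mul_comp_of_continuous hKa (hΓc _) hθ')]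
      _ ≤ ∫ a', ‖K a a'‖ * (KΓ * δ) ∂m :=
          norm_integral_le_of_norm_le (hKa.norm.mul_const _) <| Eventually.of_forall fun a' => by
            rw [norm_mul]
            exact mul_le_mul_of_nonneg_left (hΓ_le a') (norm_nonneg _)
      _ = (∫ a', ‖K a a'‖ ∂m) * (KΓ * δ) := integral_mul_const _ _
      _ ≤ C * (KΓ * δ) := by
          gcongr
          rw [integral_norm_eq_lintegral_enorm hKa.aestronglyMeasurable]
          exact ENNReal.toReal_le_coe_of_le_coe (hKC a)
      _ = C * KΓ * δ := (mul_assoc _ _ _).symm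

lemma integral_mul_integral_map {Ω : Type*} [MeasurableSpace Ω] {P : Measure Ω}
    [IsFiniteMeasure P] [SFinite m] {k : α → ℝ} (hk : Integrable k m) {g : E → ℝ}
    (hg : Continuous g) {X : α × Ω → E} (hX : Measurable X) :
    ∫ y, k y * ∫ u, g u ∂(P.map fun ω => X (y, ω)) ∂m = ∫ z, k z.1 * g (X z) ∂(m.prod P) := by
  rw [integral_prod _ (integrable_mul_comp_of_continuous (hk.comp_fst P) hg hX)]
  refine integral_congr_ae (Eventually.of_forall fun y => ?_)
  have hXy : Measurable fun ω => X (y, ω) := hX.comp measurable_prodMk_left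
  simp only [integral_const_mul, integral_map hXy.aemeasurable hg.aestronglyMeasurable]

end Interaction

lemma measurable_uncurry_IccExtend_domRestrict {α G : Type*} [MeasurableSpace α]
    [TopologicalSpace G] [TopologicalSpace.PseudoMetrizableSpace G] [MeasurableSpace G]
    [BorelSpace G] {c d : ℝ} (hcd : c ≤ d)
    {f : α → ℝ → G} (hf : Measurable f) (hf_cont : ∀ a, ContinuousOn (f a) (Icc c d)) :
    Measurable (Function.uncurry fun t a => IccExtend hcd ((Icc c d).domRestrict (f a)) t) :=
  measurable_uncurry_of_continuous_of_measurable (fun a => (hf_cont a).domRestrict.Icc_extend')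
    fun t => (measurable_pi_apply (projIcc c d hcd t : ℝ)).comp hf

section LabeledSystem

variable {Ω : Type*} [MeasurableSpace Ω] {P : Measure Ω} [IsProbabilityMeasure P]
  {F : Torus → ℝ} {Γ : Torus → Torus → ℝ} {KF KΓ : NNReal} {W : ℝ → ℝ → ℝ} {C : NNReal}

/-- The velocity of the labeled nonlinear system, as a functional of the joint configuration on
`I × Ω`: the law of each label is integrated against by averaging over the second coordinate. -/
def labeledVelocity (P : Measure Ω) (F : Torus → ℝ) (Γ : Torus → Torus → ℝ) (W : ℝ → ℝ → ℝ) :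
    (ℝ × Ω → Torus) → ℝ × Ω → ℝ :=
  (fun θ z => F (θ z)) +
    interaction ((volume.restrict I01).prod P) (fun z z' => W z.1 z'.1) Γ

lemma isLipschitzVelocity_labeledInteraction (hΓ : LipschitzWith KΓ (Function.uncurry Γ))
    (hW : Measurable (Function.uncurry W)) (hWC : ∀ x, ∫⁻ y in I01, ‖W x y‖ₑ ≤ C) :
    IsLipschitzVelocity (C * KΓ)
      (interaction ((volume.restrict I01).prod P) (fun z z' => W z.1 z'.1) Γ) := by
  refine isLipschitzVelocity_interaction (K := fun z z' : ℝ × Ω => W z.1 z'.1)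
    (hW.comp (measurable_fst.prodMap measurable_fst)) (fun z => ?_) hΓ
  rw [measurePreserving_fst.lintegral_comp (f := fun y => ‖W z.1 y‖ₑ)
    hW.of_uncurry_left.enorm]
  exact hWC z.1

lemma isLipschitzVelocity_labeledVelocity (hF : LipschitzWith KF F)
    (hΓ : LipschitzWith KΓ (Function.uncurry Γ)) (hW : Measurable (Function.uncurry W))
    (hWC : ∀ x, ∫⁻ y in I01, ‖W x y‖ₑ ≤ C) :
    IsLipschitzVelocity (KF + C * KΓ) (labeledVelocity P F Γ W) :=
  (isLipschitzVelocity_comp hF).add (isLipschitzVelocity_labeledInteraction hΓ hW hWC)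

lemma drift_pathLaw_eq_setIntegral (hF : LipschitzWith KF F)
    (hΓ : LipschitzWith KΓ (Function.uncurry Γ)) (hW : Measurable (Function.uncurry W))
    (hWC : ∀ x, ∫⁻ y in I01, ‖W x y‖ₑ ≤ C) {Θ : ℝ → ℝ × Ω → Torus}
    (hΘ : Measurable (Function.uncurry Θ)) (z : ℝ × Ω) (t : ℝ) :
    drift F Γ W (fun y s => pathLaw P (fun ω t => Θ t (y, ω)) s) z.1 (fun t => Θ t z) t =
      ∫ s in Icc 0 t, labeledVelocity P F Γ W (Θ s) z := by
  have hWz : IntegrableOn (W z.1) I01 :=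
    ⟨hW.of_uncurry_left.aestronglyMeasurable, (hWC z.1).trans_lt ENNReal.coe_lt_top⟩
  have hlaw (s : ℝ) :
      ∫ y in I01, W z.1 y * ∫ u, Γ (Θ s z) u ∂(pathLaw P (fun ω t => Θ t (y, ω)) s) =
        interaction ((volume.restrict I01).prod P) (fun z z' => W z.1 z'.1) Γ (Θ s) z :=
    integral_mul_integral_map hWz (hΓ.continuous.uncurry_left _) hΘ.of_uncurry_left
  simp only [drift, hlaw]
  exact (integral_add
    ((isLipschitzVelocity_comp hF).integrableOn hΘ z measure_Icc_lt_top.ne)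
    ((isLipschitzVelocity_labeledInteraction hΓ hW hWC).integrableOn hΘ z
      measure_Icc_lt_top.ne)).symm

lemma IsGraphon.lintegral_enorm_le_one (hW : IsGraphon W) (x : ℝ) :
    ∫⁻ y in I01, ‖W x y‖ₑ ≤ (1 : NNReal) :=
  calc ∫⁻ y in I01, ‖W x y‖ₑ
      ≤ ∫⁻ _ in I01, 1 := lintegral_mono fun y => by
        rw [Real.enorm_of_nonneg (hW.2.1 x y).1]
        exact ENNReal.ofReal_le_one.2 (hW.2.1 x y).2
    _ = (1 : NNReal) := by simp

end LabeledSystem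

theorem labeled_nonlinear_system_existence_general
    {Ω : Type*} [MeasurableSpace Ω] {T : ℝ} (hT : 0 ≤ T) (P : Measure Ω) [IsProbabilityMeasure P]
    {F : Torus → ℝ} {KF : NNReal} (hF : LipschitzWith KF F)
    {Γ : Torus → Torus → ℝ} {KΓ : NNReal} (hΓ : LipschitzWith KΓ (Function.uncurry Γ))
    {W : ℝ → ℝ → ℝ} (hW : Measurable (Function.uncurry W))
    {C : NNReal} (hWC : ∀ x, ∫⁻ y in I01, ‖W x y‖ₑ ≤ C)
    {θ0 : ℝ → Ω → Torus} (hθ0 : Measurable (Function.uncurry θ0))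
    {B : ℝ → Ω → ℝ → ℝ} (hB : Measurable (Function.uncurry B))
    (hB_cont : ∀ x ω, ContinuousOn (B x ω) (Icc 0 T)) :
    ∃ θ : ℝ → Ω → ℝ → Torus, IsLabeledSolution T P F Γ W θ0 B θ := by
  let β : ℝ → ℝ × Ω → ℝ := fun t z => IccExtend hT ((Icc 0 T).domRestrict (B z.1 z.2)) t
  have hβ : Measurable (Function.uncurry β) :=
    measurable_uncurry_IccExtend_domRestrict hT hB fun z => hB_cont z.1 z.2
  have hβ_cont (z : ℝ × Ω) : Continuous (β · z) := (hB_cont z.1 z.2).domRestrict.Icc_extend'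
  have hb := isLipschitzVelocity_labeledVelocity (P := P) hF hΓ hW hWC
  obtain ⟨Θ, hΘ, hfix⟩ := hb.exists_measurable_picardMap_eq (by positivity) hθ0 hβ
  refine ⟨fun x ω t => Θ t (x, ω), measurable_pi_iff.2 fun t => hΘ.of_uncurry_left,
    fun x ω => ?_, Eventually.of_forall fun x => Eventually.of_forall fun ω t ht => ?_⟩
  · have hcont := hb.continuousOn_picardMap (θ₀ := Function.uncurry θ0) (T := T) hΘ
      (hβ_cont (x, ω)).continuousOn
    rwa [hfix] at hcont
  · have hβB : β t (x, ω) = B x ω t := IccExtend_of_mem hT _ ht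
    rw [drift_pathLaw_eq_setIntegral hF hΓ hW hWC hΘ (x, ω) t, ← hβB]
    exact (congrFun₂ hfix t (x, ω)).symm

/-- existence for the labeled nonlinear system: for every jointly
measurable initial datum `θ0 : I × Ω → 𝕋` and every jointly measurable family
`B : I × Ω → C([0,T],ℝ)` of continuous processes with `B^x_0 = 0`, there exists a solution
`θ` of the nonlinear system for the labeled graphon `W` with initial datum `θ0` and driving
processes `B`. -/
theorem labeled_nonlinear_system_existence
    {Ω : Type*} [MeasurableSpace Ω] (T : ℝ) (hT : 0 < T)
    (P : Measure Ω) [IsProbabilityMeasure P]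
    (F : Torus → ℝ) (Γ : Torus → Torus → ℝ) (hF : BddLip F) (hΓ : BddLip2 Γ)
    (W : ℝ → ℝ → ℝ) (hW : IsGraphon W)
    (θ0 : ℝ → Ω → Torus) (hθ0 : Measurable (fun p : ℝ × Ω => θ0 p.1 p.2))
    (B : ℝ → Ω → ℝ → ℝ) (hBmeas : Measurable (fun p : ℝ × Ω => B p.1 p.2))
    (hB0 : ∀ x ω, B x ω 0 = 0) (hBcont : ∀ x ω, ContinuousOn (B x ω) (Set.Icc 0 T)) :
    ∃ θ : ℝ → Ω → ℝ → Torus, IsLabeledSolution T P F Γ W θ0 B θ := by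
  obtain ⟨⟨_, hF⟩, -⟩ := hF
  obtain ⟨⟨_, hΓ⟩, -⟩ := hΓ
  exact labeled_nonlinear_system_existence_general hT.le P hF hΓ hW.1 hW.lintegral_enorm_le_one
    hθ0 hBmeas hBcont
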